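/- arXiv:1305.4785 — 2 statements merged into one kernel-verified Lean document; each statement's English description precedes it below -/
import Mathlib

section
/- Let c₂₂, c₃₃ ∈ ℝ with 9c₂₂² − 6c₃₃ > 0, and set s = √(9c₂₂² − 6c₃₃). Define h : ℝ → ℝ by h(u) = (2/s)·arctan(s·u/2). Then h(0) = 0, h′(0) = 1, h″(0) = 0, h′(u) > 0 for all u ∈ ℝ, and for every u ∈ ℝ: (1/3)h‴(u) − (h″(u))²/(2h′(u)) + ((3c₂₂² − 2c₃₃)/2)·(h′(u))³ = 0. -/
/-!
Multiplied by `3 / h'`, the equation reads `S(h) = -(s² / 2) h'²`, where `S` is the Schwarzian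
derivative and `s² = 9c₂₂² − 6c₃₃`. Since `S(arctan) = -2 arctan'²`, and `S` ignores a constant
factor outside and is multiplied by `b²` when the variable is multiplied by `b`, the function
`u ↦ b⁻¹ arctan (bu)`, whose derivative is `arctan' (bu)`, satisfies `S(h) = -2b² h'²`; take
`b = s / 2`.
-/

section Schwarzian

variable {𝕜 : Type*} [NontriviallyNormedField 𝕜]

/-- The Schwarzian derivative `f''' / f' - (3 / 2) (f'' / f')²`, which puts the normalisation
equation into a form that is easy to rescale. Where `f' = 0` its value is `0`, by the convention
for division by zero. -/
noncomputable def schwarzian (f : 𝕜 → 𝕜) (x : 𝕜) : 𝕜 :=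
  iteratedDeriv 3 f x / deriv f x - 3 / 2 * (iteratedDeriv 2 f x / deriv f x) ^ 2

theorem deriv_mul_schwarzian {f : 𝕜 → 𝕜} {x : 𝕜} (hf : deriv f x ≠ 0) :
    deriv f x * schwarzian f x =
      iteratedDeriv 3 f x - 3 / 2 * (iteratedDeriv 2 f x ^ 2 / deriv f x) := by
  rw [schwarzian, mul_sub, mul_div_cancel₀ _ hf]
  field_simp

theorem schwarzian_const_mul {c : 𝕜} (hc : c ≠ 0) (f : 𝕜 → 𝕜) (x : 𝕜) :
    schwarzian (fun y => c * f y) x = schwarzian f x := by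
  simp only [schwarzian, iteratedDeriv_const_mul_field, deriv_const_mul_field,
    mul_div_mul_left _ _ hc]

theorem schwarzian_comp_const_mul {f : 𝕜 → 𝕜} (hf : ContDiff 𝕜 3 f) (b x : 𝕜) :
    schwarzian (fun y => f (b * y)) x = b ^ 2 * schwarzian f (b * x) := by
  rcases eq_or_ne b 0 with rfl | hb
  · simp [schwarzian]
  · rw [schwarzian, schwarzian, iteratedDeriv_comp_const_mul hf,
      iteratedDeriv_comp_const_mul (hf.of_le (by norm_num)), deriv_comp_mul_left, smul_eq_mul]
    field_simp
    ring

end Schwarzian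

section Arctan

theorem iteratedDeriv_two_arctan (x : ℝ) :
    iteratedDeriv 2 Real.arctan x = -(2 * x) / (1 + x ^ 2) ^ 2 := by
  have hden : HasDerivAt (fun y : ℝ => 1 + y ^ 2) (2 * x) x := by
    simpa using (hasDerivAt_pow 2 x).const_add 1
  simp only [iteratedDeriv_succ, iteratedDeriv_zero, Real.deriv_arctan, one_div]
  exact (hden.fun_inv (by positivity)).deriv

theorem iteratedDeriv_three_arctan (x : ℝ) :
    iteratedDeriv 3 Real.arctan x = (6 * x ^ 2 - 2) / (1 + x ^ 2) ^ 3 := by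
  have hnum : HasDerivAt (fun y : ℝ => -(2 * y)) (-2) x := by
    simpa using ((hasDerivAt_id x).const_mul 2).fun_neg
  have hden : HasDerivAt (fun y : ℝ => (1 + y ^ 2) ^ 2) (2 * (1 + x ^ 2) * (2 * x)) x := by
    simpa using ((hasDerivAt_pow 2 x).const_add 1).fun_pow 2
  rw [iteratedDeriv_succ, funext iteratedDeriv_two_arctan,
    (hnum.fun_div hden (by positivity)).deriv]
  field_simp
  ring

theorem schwarzian_arctan (x : ℝ) :
    schwarzian Real.arctan x = -2 * deriv Real.arctan x ^ 2 := by
  rw [schwarzian, iteratedDeriv_three_arctan, iteratedDeriv_two_arctan, Real.deriv_arctan]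
  field_simp
  ring

variable {b : ℝ}

theorem deriv_inv_mul_arctan_mul (hb : b ≠ 0) (x : ℝ) :
    deriv (fun y => b⁻¹ * Real.arctan (b * y)) x = deriv Real.arctan (b * x) := by
  rw [deriv_const_mul_field, deriv_comp_mul_left, smul_eq_mul, inv_mul_cancel_left₀ hb]

theorem schwarzian_inv_mul_arctan_mul (hb : b ≠ 0) (x : ℝ) :
    schwarzian (fun y => b⁻¹ * Real.arctan (b * y)) x =
      -2 * b ^ 2 * deriv (fun y => b⁻¹ * Real.arctan (b * y)) x ^ 2 := by
  rw [schwarzian_const_mul (inv_ne_zero hb), schwarzian_comp_const_mul Real.contDiff_arctan,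
    schwarzian_arctan, deriv_inv_mul_arctan_mul hb]
  ring

end Arctan

/-- Solution of the normalisation ODE for `c₂₃ = 0`:
`h(u) = (2/s) arctan(su/2)` with `s = √(9c₂₂² − 6c₃₃)`. -/
theorem stmt_4 (c22 c33 : ℝ) (hpos : 9 * c22 ^ 2 - 6 * c33 > 0)
    (s : ℝ) (hs : s = Real.sqrt (9 * c22 ^ 2 - 6 * c33))
    (h : ℝ → ℝ) (hh : ∀ u : ℝ, h u = (2 / s) * Real.arctan (s * u / 2)) :
    h 0 = 0 ∧ deriv h 0 = 1 ∧ iteratedDeriv 2 h 0 = 0 ∧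
    (∀ u : ℝ, 0 < deriv h u) ∧
    ∀ u : ℝ,
      (1 / 3) * iteratedDeriv 3 h u - (iteratedDeriv 2 h u) ^ 2 / (2 * deriv h u)
        + ((3 * c22 ^ 2 - 2 * c33) / 2) * (deriv h u) ^ 3 = 0 := by
  have hs_sq : s ^ 2 = 9 * c22 ^ 2 - 6 * c33 := hs ▸ Real.sq_sqrt hpos.le
  have hb : s / 2 ≠ 0 := div_ne_zero (hs ▸ (Real.sqrt_pos.mpr hpos).ne') two_ne_zero
  have hh_scaled : h = fun u => (s / 2)⁻¹ * Real.arctan (s / 2 * u) :=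
    funext fun u => by rw [hh, inv_div, mul_div_right_comm]
  have hderiv (u : ℝ) : deriv h u = 1 / (1 + (s / 2 * u) ^ 2) := by
    rw [hh_scaled, deriv_inv_mul_arctan_mul hb, Real.deriv_arctan]
  have hderiv_pos (u : ℝ) : 0 < deriv h u := by
    rw [hderiv]
    positivity
  have hschwarzian (u : ℝ) : schwarzian h u = -2 * (s / 2) ^ 2 * deriv h u ^ 2 := by
    rw [hh_scaled, schwarzian_inv_mul_arctan_mul hb]
  refine ⟨by simp [hh], by simp [hderiv], ?_, hderiv_pos, fun u => ?_⟩
  · simp [hh_scaled, iteratedDeriv_const_mul_field,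
      iteratedDeriv_comp_const_mul Real.contDiff_arctan, iteratedDeriv_two_arctan]
  · have hode := deriv_mul_schwarzian (hderiv_pos u).ne'
    rw [hschwarzian] at hode
    linear_combination -1 / 3 * hode - deriv h u ^ 3 / 6 * hs_sq
end

section
/- Define f : (−π/2, π/2) → ℝ by f(x) = −2·log(cos x). Then for every x ∈ (−π/2, π/2): f⁗(x) − 3·f′(x)·f‴(x) + 2·(f′(x))²·f″(x) − (f″(x))² = 0. -/
/-!
Differentiating `f‴ = f′f″` gives `f⁗ = (f″)² + f′f‴`, and substituting both into
`f⁗ − 3f′f‴ + 2(f′)²f″ − (f″)²` leaves `−2f′f‴ + 2f′(f′f″) = 0`. The third-order equation is the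
derivative of the Riccati equation `u′ = u²/2 + c` for `u = f′`, which `u = 2 tan` satisfies
with `c = 2`.
-/

open Filter Topology

section ZeroCurvature

variable {𝕜 : Type*} [NontriviallyNormedField 𝕜]

/-- For `𝕜 = ℝ` and `f = log h″`, the curvature of the tube hypersurface `v = h(x)` in `ℂ²`, up to a
constant factor chosen so that the leading term is `f⁗`; it vanishes identically exactly when the
hypersurface is locally spherical. -/
noncomputable def tubeCurvature (f : 𝕜 → 𝕜) (x : 𝕜) : 𝕜 :=
  iteratedDeriv 4 f x - 3 * deriv f x * iteratedDeriv 3 f x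
    + 2 * (deriv f x) ^ 2 * iteratedDeriv 2 f x - (iteratedDeriv 2 f x) ^ 2

theorem iteratedDeriv_succ_eventuallyEq {F : Type*} [NormedAddCommGroup F] [NormedSpace 𝕜 F]
    {f g g' : 𝕜 → F} {n : ℕ} {x : 𝕜} (hfg : iteratedDeriv n f =ᶠ[𝓝 x] g)
    (hg : ∀ᶠ y in 𝓝 x, HasDerivAt g (g' y) y) :
    iteratedDeriv (n + 1) f =ᶠ[𝓝 x] g' := by
  rw [iteratedDeriv_succ]
  exact hfg.deriv.trans (hg.mono fun _ hy => hy.deriv)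

theorem tubeCurvature_eq_zero_of_third_deriv_eq_mul {f u v : 𝕜 → 𝕜} {x : 𝕜}
    (hf : ∀ᶠ y in 𝓝 x, HasDerivAt f (u y) y) (hu : ∀ᶠ y in 𝓝 x, HasDerivAt u (v y) y)
    (hv : ∀ᶠ y in 𝓝 x, HasDerivAt v (u y * v y) y) :
    tubeCurvature f x = 0 := by
  have huv : ∀ᶠ y in 𝓝 x, HasDerivAt (fun y => u y * v y) (v y * v y + u y * (u y * v y)) y := by
    filter_upwards [hu, hv] with y huy hvy using huy.mul hvy
  have h₁ : iteratedDeriv 1 f =ᶠ[𝓝 x] u :=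
    iteratedDeriv_succ_eventuallyEq iteratedDeriv_zero.eventuallyEq hf
  have h₂ : iteratedDeriv 2 f =ᶠ[𝓝 x] v := iteratedDeriv_succ_eventuallyEq h₁ hu
  have h₃ : iteratedDeriv 3 f =ᶠ[𝓝 x] fun y => u y * v y := iteratedDeriv_succ_eventuallyEq h₂ hv
  have h₄ : iteratedDeriv 4 f x = v x * v x + u x * (u x * v x) :=
    (iteratedDeriv_succ_eventuallyEq h₃ huv).eq_of_nhds
  rw [tubeCurvature, h₄, h₃.eq_of_nhds, h₂.eq_of_nhds, ← iteratedDeriv_one, h₁.eq_of_nhds]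
  ring

theorem tubeCurvature_eq_zero_of_riccati [NeZero (2 : 𝕜)] {f u : 𝕜 → 𝕜} {c x : 𝕜}
    (hf : ∀ᶠ y in 𝓝 x, HasDerivAt f (u y) y)
    (hu : ∀ᶠ y in 𝓝 x, HasDerivAt u (u y ^ 2 / 2 + c) y) :
    tubeCurvature f x = 0 := by
  refine tubeCurvature_eq_zero_of_third_deriv_eq_mul hf hu (hu.mono fun y huy => ?_)
  refine (((huy.fun_pow 2).div_const 2).add_const c).congr_deriv ?_
  have two_ne_zero : (2 : 𝕜) ≠ 0 := NeZero.ne 2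
  field_simp
  ring

end ZeroCurvature

theorem hasDerivAt_log_cos {x : ℝ} (hx : Real.cos x ≠ 0) :
    HasDerivAt (fun y => Real.log (Real.cos y)) (-Real.tan x) x := by
  simpa only [Real.tan_eq_sin_div_cos, neg_div] using (Real.hasDerivAt_cos x).log hx

theorem hasDerivAt_tan_one_add_sq {x : ℝ} (hx : Real.cos x ≠ 0) :
    HasDerivAt Real.tan (1 + Real.tan x ^ 2) x := by
  simpa only [← Real.inv_one_add_tan_sq hx, one_div, inv_inv] using Real.hasDerivAt_tan hx

/-- `f(x) = −2 log cos x` solves the tube zero-curvature equation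
`f⁗ − 3f′f‴ + 2(f′)²f″ − (f″)² = 0` on `(−π/2, π/2)`. -/
theorem stmt_17 (f : ℝ → ℝ) (hf : ∀ x : ℝ, f x = -2 * Real.log (Real.cos x)) :
    ∀ x ∈ Set.Ioo (-(Real.pi / 2)) (Real.pi / 2),
      iteratedDeriv 4 f x - 3 * deriv f x * iteratedDeriv 3 f x
        + 2 * (deriv f x) ^ 2 * iteratedDeriv 2 f x - (iteratedDeriv 2 f x) ^ 2 = 0 := by
  intro x hx
  have hcos : ∀ᶠ y in 𝓝 x, Real.cos y ≠ 0 :=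
    Real.continuous_cos.continuousAt.eventually_ne (Real.cos_pos_of_mem_Ioo hx).ne'
  have hderiv : ∀ᶠ y in 𝓝 x, HasDerivAt f (2 * Real.tan y) y := by
    filter_upwards [hcos] with y hy
    rw [funext hf]
    exact ((hasDerivAt_log_cos hy).const_mul (-2)).congr_deriv (by ring)
  have hriccati : ∀ᶠ y in 𝓝 x,
      HasDerivAt (fun y => 2 * Real.tan y) ((2 * Real.tan y) ^ 2 / 2 + 2) y := by
    filter_upwards [hcos] with y hy
    exact ((hasDerivAt_tan_one_add_sq hy).const_mul 2).congr_deriv (by ring)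
  exact tubeCurvature_eq_zero_of_riccati hderiv hriccati
end
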